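/- $\sum_{n=1}^{\infty} \frac{1}{n^2 \binom{2n}{n}}\left(6 H_{\lfloor n/2 \rfloor}^{(2)} - \frac{(-1)^n}{n^2}\right) = \frac{13\pi^4}{1620}$. -/

import Mathlib

open Filter Topology

/-- Generalized harmonic number `H_n^{(s)} = ∑_{k=1}^n 1/k^s`. -/
noncomputable def H (s n : ℕ) : ℝ := ∑ k ∈ Finset.range n, 1 / ((k:ℝ) + 1) ^ s

/-!
Write `w_m = 1 / (m² C(2m, m))`. Summing a Wilf–Zeilberger pair along the boundary of a large
square, or of one of the two halves into which a staircase along the diagonal cuts it, trades a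
series weighted by `w_m` for a series without binomial coefficients, as the far sides contribute
nothing in the limit. Three pairs are enough:

* `∑ w_m (6 H_{m-1}^{(2)} + 1/m²) = ∑ H_{m-1}^{(2)} / m² = π⁴/120`;
* `∑ w_m (3/m² - 9 H_{m-1}^{(2)}) = ζ(4) = π⁴/90`;
* `∑ w_m (6 r_{m-1} + (9 + 11 (-1)^m / 2)/m²) = 2 ζ(4) - 2 ∑ H_{m-1} / m³ = π⁴/60`, where
  `r_n = ∑_{k ≤ n} (-1)^k / k²`.

The first two give `∑ w_m H_{m-1}^{(2)}` and `∑ w_m / m²`, and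
`H_{⌊m/2⌋}^{(2)} = 2 (H_m^{(2)} + r_m)` makes the series of the theorem a linear combination of
these two and the third.
-/

section

open Finset

/-- A pair of functions on the lattice `ℕ × ℕ` satisfying the Wilf–Zeilberger equation. Reading
`F n k` as the value of a discrete `1`-form on the edge from `(n, k)` to `(n, k + 1)`, and `G n k`
as its value on the edge from `(n, k)` to `(n + 1, k)`, this says that the form is closed. -/
def IsWZPair {M : Type*} [AddCommGroup M] (F G : ℕ → ℕ → M) : Prop :=
  ∀ n k, F (n + 1) k - F n k = G n (k + 1) - G n k

namespace IsWZPair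

variable {M : Type*} [AddCommGroup M] {F G F' G' : ℕ → ℕ → M}

lemma add (h : IsWZPair F G) (h' : IsWZPair F' G') : IsWZPair (F + F') (G + G') := fun n k => by
  simp only [Pi.add_apply, add_sub_add_comm, h n k, h' n k]

lemma sum_row_sub_sum_row (h : IsWZPair F G) (N k : ℕ) :
    ∑ n ∈ range N, G n (k + 1) - ∑ n ∈ range N, G n k = F N k - F 0 k := by
  rw [← sum_sub_distrib, ← sum_congr rfl fun n _ => h n k, sum_range_sub (F · k)]

lemma sum_column_sub_sum_column (h : IsWZPair F G) (N K : ℕ) :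
    ∑ k ∈ range K, F N k - ∑ k ∈ range K, F 0 k
      = ∑ n ∈ range N, G n K - ∑ n ∈ range N, G n 0 := by
  rw [← sum_range_sub (fun k => ∑ n ∈ range N, G n k), ← sum_sub_distrib]
  exact sum_congr rfl fun k _ => (h.sum_row_sub_sum_row N k).symm

lemma sum_staircase (h : IsWZPair F G) (N : ℕ) :
    ∑ n ∈ range N, (G n n + F (n + 1) n)
      = ∑ k ∈ range N, F 0 k + ∑ n ∈ range N, G n N := by
  induction N with
  | zero => simp
  | succ N ih =>
    rw [sum_range_succ, ih, sum_range_succ (F 0),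
      sub_eq_iff_eq_add.1 (h.sum_row_sub_sum_row (N + 1) N), sum_range_succ (G · N)]
    abel

variable [TopologicalSpace M] [IsTopologicalAddGroup M] {S : M}

lemma tendsto_sum_staircase (h : IsWZPair F G)
    (left : Tendsto (fun N => ∑ k ∈ range N, F 0 k) atTop (𝓝 S))
    (top : Tendsto (fun N => ∑ n ∈ range N, G n N) atTop (𝓝 0)) :
    Tendsto (fun N => ∑ n ∈ range N, (G n n + F (n + 1) n)) atTop (𝓝 S) := by
  simpa only [h.sum_staircase, add_zero] using left.add top

lemma tendsto_sum_bottom (h : IsWZPair F G)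
    (left : Tendsto (fun N => ∑ k ∈ range N, F 0 k) atTop (𝓝 S))
    (top : Tendsto (fun N => ∑ n ∈ range N, G n N) atTop (𝓝 0))
    (right : Tendsto (fun N => ∑ k ∈ range N, F N k) atTop (𝓝 0)) :
    Tendsto (fun N => ∑ n ∈ range N, G n 0) atTop (𝓝 S) := by
  have bottom (N : ℕ) : ∑ n ∈ range N, G n 0
      = ∑ k ∈ range N, F 0 k + ∑ n ∈ range N, G n N - ∑ k ∈ range N, F N k := by
    rw [← sub_sub_self (∑ n ∈ range N, G n N) (∑ n ∈ range N, G n 0),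
      ← h.sum_column_sub_sum_column]
    abel
  simpa only [bottom, add_zero, sub_zero] using (left.add top).sub right

end IsWZPair

/-- The alternating harmonic number `∑_{k=1}^n (-1)^k / k^s`; its first term is `-1`. -/
noncomputable def altH (s n : ℕ) : ℝ := ∑ k ∈ range n, (-1 : ℝ) ^ (k + 1) / ((k : ℝ) + 1) ^ s

lemma H_zero (s : ℕ) : H s 0 = 0 := sum_range_zero _

lemma H_succ (s n : ℕ) : H s (n + 1) = H s n + 1 / ((n : ℝ) + 1) ^ s := sum_range_succ _ _

lemma altH_zero (s : ℕ) : altH s 0 = 0 := sum_range_zero _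

lemma altH_succ (s n : ℕ) : altH s (n + 1) = altH s n - (-1) ^ n / ((n : ℝ) + 1) ^ s := by
  rw [altH, sum_range_succ, pow_succ, ← altH]
  ring

lemma H_nonneg (s n : ℕ) : 0 ≤ H s n := sum_nonneg fun _ _ => by positivity

lemma H_mono (s : ℕ) : Monotone (H s) := fun _ _ hmn =>
  sum_le_sum_of_subset_of_nonneg (range_mono hmn) fun _ _ _ => by positivity

lemma abs_H_sub_H_le {s i M : ℕ} (h : i ≤ M) : |H s i - H s M| ≤ H s M :=
  abs_le.2 ⟨by linarith [H_nonneg s i], by linarith [H_mono s h, H_nonneg s M]⟩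

lemma abs_altH_le_H (s n : ℕ) : |altH s n| ≤ H s n :=
  (abs_sum_le_sum_abs _ _).trans_eq <| sum_congr rfl fun k _ => by
    rw [abs_div, abs_neg_one_pow, abs_of_pos (by positivity : (0 : ℝ) < ((k : ℝ) + 1) ^ s)]

lemma two_mul_H_half (s n : ℕ) : 2 * H s (n / 2) = 2 ^ s * (H s n + altH s n) := by
  induction n using Nat.twoStepInduction with
  | zero => simp [H, altH]
  | one => simp [H, altH]
  | more n ih _ =>
    rw [show (n + 2) / 2 = n / 2 + 1 by lia, H_succ, mul_add, ih, H_succ, H_succ, altH_succ,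
      altH_succ, pow_succ (-1 : ℝ) n]
    push_cast
    obtain ⟨k, rfl⟩ | ⟨k, rfl⟩ := n.even_or_odd
    · rw [Even.neg_one_pow ⟨k, rfl⟩, show (k + k) / 2 = k by lia]
      push_cast
      rw [show (k : ℝ) + k + 1 + 1 = 2 * (k + 1) by ring, mul_pow]
      field_simp
      ring
    · rw [Odd.neg_one_pow ⟨k, rfl⟩, show (2 * k + 1) / 2 = k by lia]
      push_cast
      rw [show 2 * (k : ℝ) + 1 + 1 = 2 * (k + 1) by ring, mul_pow]
      field_simp
      ring

lemma hasSum_one_div_succ_pow {s : ℕ} {S : ℝ} (hs : s ≠ 0)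
    (h : HasSum (fun n : ℕ => 1 / (n : ℝ) ^ s) S) :
    HasSum (fun n : ℕ => 1 / ((n : ℝ) + 1) ^ s) S := by
  simpa [hs] using (hasSum_nat_add_iff' 1).2 h

lemma hasSum_one_div_succ_sq : HasSum (fun n : ℕ => 1 / ((n : ℝ) + 1) ^ 2) (Real.pi ^ 2 / 6) :=
  hasSum_one_div_succ_pow two_ne_zero hasSum_zeta_two

lemma tendsto_H_two : Tendsto (H 2) atTop (𝓝 (Real.pi ^ 2 / 6)) :=
  hasSum_one_div_succ_sq.tendsto_sum_nat

lemma hasSum_one_div_succ_pow_four :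
    HasSum (fun n : ℕ => 1 / ((n : ℝ) + 1) ^ 4) (Real.pi ^ 4 / 90) :=
  hasSum_one_div_succ_pow four_ne_zero hasSum_zeta_four

lemma tendsto_H_four : Tendsto (H 4) atTop (𝓝 (Real.pi ^ 4 / 90)) :=
  hasSum_one_div_succ_pow_four.tendsto_sum_nat

lemma H_two_le_two (n : ℕ) : H 2 n ≤ 2 := by
  have := (H_mono 2).ge_of_tendsto tendsto_H_two n
  nlinarith [Real.pi_lt_d2, Real.pi_pos]

lemma H_one_le_one_add_log (n : ℕ) : H 1 n ≤ 1 + Real.log n := by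
  have : ((harmonic n : ℚ) : ℝ) = H 1 n := by simp [harmonic, H]
  exact this ▸ harmonic_le_one_add_log n

lemma tendsto_one_add_H_one_pow_div (p : ℕ) :
    Tendsto (fun n : ℕ => (1 + H 1 n) ^ p / ((n : ℝ) + 1)) atTop (𝓝 0) := by
  have log_pow : Tendsto (fun n : ℕ => (2 + Real.log n) ^ p / (n : ℝ)) atTop (𝓝 0) := by
    have scale : Tendsto (fun n : ℕ => Real.exp 2 * n) atTop atTop :=
      tendsto_natCast_atTop_atTop.const_mul_atTop (Real.exp_pos 2)
    have := ((Real.isLittleO_pow_log_id_atTop (n := p)).tendsto_div_nhds_zero.comp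
      scale).const_mul (Real.exp 2)
    rw [mul_zero] at this
    refine this.congr' ?_
    filter_upwards [eventually_gt_atTop 0] with n hn
    have hn' : (n : ℝ) ≠ 0 := by positivity
    simp only [Function.comp_apply, id_eq, Real.log_mul (Real.exp_ne_zero 2) hn', Real.log_exp]
    field_simp
  refine squeeze_zero' (.of_forall fun n => ?_) ?_ log_pow
  · have := H_nonneg 1 n
    positivity
  · filter_upwards [eventually_gt_atTop 0] with n hn
    have hH := H_nonneg 1 n
    have : (0 : ℝ) < n := by positivity
    gcongr ?_ ^ p / ?_
    · linarith [H_one_le_one_add_log n]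
    · linarith

lemma tendsto_sum_range_zero_of_abs_le {f : ℕ → ℕ → ℝ} (C : ℝ) (p : ℕ)
    (hf : ∀ M i, i < M → |f M i| ≤ C * (1 + H 1 M) ^ p / (((M : ℝ) + 1) * ((i : ℝ) + 1))) :
    Tendsto (fun M => ∑ i ∈ range M, f M i) atTop (𝓝 0) := by
  have bound (M : ℕ) :
      |∑ i ∈ range M, f M i| ≤ |C| * ((1 + H 1 M) ^ (p + 1) / ((M : ℝ) + 1)) := by
    have hH := H_nonneg 1 M
    calc |∑ i ∈ range M, f M i|
      _ ≤ ∑ i ∈ range M, |f M i| := abs_sum_le_sum_abs _ _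
      _ ≤ ∑ i ∈ range M, C * (1 + H 1 M) ^ p / ((M : ℝ) + 1) * (1 / ((i : ℝ) + 1) ^ 1) :=
        sum_le_sum fun i hi => (hf M i (mem_range.1 hi)).trans_eq (by field_simp)
      _ = C * ((1 + H 1 M) ^ p / ((M : ℝ) + 1) * H 1 M) := by rw [← mul_sum, ← H]; ring
      _ ≤ |C| * ((1 + H 1 M) ^ p / ((M : ℝ) + 1) * (1 + H 1 M)) := by
        gcongr
        · exact le_abs_self C
        · linarith
      _ = |C| * ((1 + H 1 M) ^ (p + 1) / ((M : ℝ) + 1)) := by ring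
  refine squeeze_zero_norm bound ?_
  simpa only [mul_zero] using (tendsto_one_add_H_one_pow_div (p + 1)).const_mul |C|

lemma sum_H_div_pow (s N : ℕ) :
    ∑ n ∈ range N, H s n / ((n : ℝ) + 1) ^ s = (H s N ^ 2 - H (2 * s) N) / 2 := by
  induction N with
  | zero => simp [H_zero]
  | succ N ih =>
    rw [sum_range_succ, ih, H_succ, H_succ, mul_comm 2 s, pow_mul]
    field_simp
    ring

lemma tendsto_sum_H_two_div_sq :
    Tendsto (fun N => ∑ n ∈ range N, H 2 n / ((n : ℝ) + 1) ^ 2) atTop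
      (𝓝 (Real.pi ^ 4 / 120)) := by
  simp only [sum_H_div_pow]
  convert ((tendsto_H_two.pow 2).sub tendsto_H_four).div_const 2 using 2
  ring

lemma sum_antidiagonal_inv_sq_mul_inv_sq (n : ℕ) :
    ∑ p ∈ antidiagonal n, 1 / ((p.1 : ℝ) + 1) ^ 2 * (1 / ((p.2 : ℝ) + 1) ^ 2)
      = 2 * (H 2 (n + 1) / ((n + 1 : ℕ) + 1 : ℝ) ^ 2)
        + 4 * (H 1 (n + 1) / ((n + 1 : ℕ) + 1 : ℝ) ^ 3) := by
  have sum_fst (s : ℕ) : ∑ p ∈ antidiagonal n, 1 / ((p.1 : ℝ) + 1) ^ s = H s (n + 1) :=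
    Finset.Nat.sum_antidiagonal_eq_sum_range_succ_mk _ n
  have sum_snd (s : ℕ) : ∑ p ∈ antidiagonal n, 1 / ((p.2 : ℝ) + 1) ^ s = H s (n + 1) := by
    rw [← sum_fst s]
    exact Finset.Nat.sum_antidiagonal_swap (f := fun p => 1 / ((p.1 : ℝ) + 1) ^ s)
  have partial_fractions : ∀ p ∈ antidiagonal n,
      1 / ((p.1 : ℝ) + 1) ^ 2 * (1 / ((p.2 : ℝ) + 1) ^ 2)
        = (1 / ((p.1 : ℝ) + 1) ^ 2 + 1 / ((p.2 : ℝ) + 1) ^ 2) / ((n + 1 : ℕ) + 1 : ℝ) ^ 2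
          + 2 * ((1 / ((p.1 : ℝ) + 1) ^ 1 + 1 / ((p.2 : ℝ) + 1) ^ 1)
            / ((n + 1 : ℕ) + 1 : ℝ) ^ 3) := by
    rintro ⟨i, j⟩ hp
    obtain rfl := mem_antidiagonal.1 hp
    push_cast
    field_simp
    ring
  rw [sum_congr rfl partial_fractions, sum_add_distrib, ← mul_sum, ← sum_div, ← sum_div,
    sum_add_distrib, sum_add_distrib, sum_fst, sum_fst, sum_snd, sum_snd]
  ring

lemma tendsto_sum_H_one_div_cube :
    Tendsto (fun N => ∑ n ∈ range N, H 1 n / ((n : ℝ) + 1) ^ 3) atTop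
      (𝓝 (Real.pi ^ 4 / 360)) := by
  let c (n : ℕ) : ℝ := 2 * (H 2 n / ((n : ℝ) + 1) ^ 2) + 4 * (H 1 n / ((n : ℝ) + 1) ^ 3)
  have product : Tendsto (fun N => ∑ n ∈ range N, c n) atTop
      (𝓝 (Real.pi ^ 2 / 6 * (Real.pi ^ 2 / 6))) := by
    have norm_summable := hasSum_one_div_succ_sq.summable.norm
    have cauchy := (summable_norm_sum_mul_antidiagonal_of_summable_norm norm_summable
      norm_summable).of_norm.hasSum
    rw [← tsum_mul_tsum_eq_tsum_sum_antidiagonal_of_summable_norm norm_summable norm_summable,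
      hasSum_one_div_succ_sq.tsum_eq] at cauchy
    simp only [sum_antidiagonal_inv_sq_mul_inv_sq] at cauchy
    simpa [c, H_zero] using ((hasSum_nat_add_iff (f := c) 1).1 cauchy).tendsto_sum_nat
  have split (N : ℕ) : ∑ n ∈ range N, H 1 n / ((n : ℝ) + 1) ^ 3
      = (∑ n ∈ range N, c n - 2 * ∑ n ∈ range N, H 2 n / ((n : ℝ) + 1) ^ 2) / 4 := by
    simp only [c, sum_add_distrib, ← mul_sum]
    ring
  simp only [split]
  convert (product.sub (tendsto_sum_H_two_div_sq.const_mul 2)).div_const 4 using 2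
  ring

/-- The beta value `B(i + 1, j + 1) = i! j! / (i + j + 1)!`, the common hypergeometric factor of the
Wilf–Zeilberger pairs below. -/
noncomputable def betaNat (i j : ℕ) : ℝ := i.factorial * j.factorial / (i + j + 1).factorial

lemma betaNat_comm (i j : ℕ) : betaNat i j = betaNat j i := by
  rw [betaNat, betaNat, add_comm i j, mul_comm]

lemma betaNat_nonneg (i j : ℕ) : 0 ≤ betaNat i j := by
  unfold betaNat
  positivity

lemma betaNat_succ_left (i j : ℕ) :
    betaNat (i + 1) j = betaNat i j * (((i : ℝ) + 1) / ((i : ℝ) + j + 2)) := by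
  rw [betaNat, betaNat, show i + 1 + j + 1 = i + j + 1 + 1 by ring, Nat.factorial_succ (i + j + 1),
    Nat.factorial_succ i]
  push_cast
  field_simp
  ring

lemma betaNat_succ_right (i j : ℕ) :
    betaNat i (j + 1) = betaNat i j * (((j : ℝ) + 1) / ((i : ℝ) + j + 2)) := by
  rw [betaNat_comm, betaNat_succ_left, betaNat_comm, add_comm (j : ℝ) i]

lemma betaNat_zero_left (j : ℕ) : betaNat 0 j = 1 / ((j : ℝ) + 1) := by
  rw [betaNat, zero_add, Nat.factorial_succ]
  push_cast
  field_simp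
  simp

lemma betaNat_le_right (i j : ℕ) : betaNat i j ≤ 1 / ((j : ℝ) + 1) := by
  induction i with
  | zero => exact (betaNat_zero_left j).le
  | succ i ih =>
    rw [betaNat_succ_left]
    refine (mul_le_of_le_one_right (betaNat_nonneg i j) ?_).trans ih
    rw [div_le_one (by positivity)]
    linarith [Nat.cast_nonneg (α := ℝ) j]

lemma betaNat_le_left (i j : ℕ) : betaNat i j ≤ 1 / ((i : ℝ) + 1) :=
  betaNat_comm i j ▸ betaNat_le_right j i

/-- The Apéry-type weight `1 / (m² C(2m, m))` at `m = n + 1`. -/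
noncomputable def aperyWeight (n : ℕ) : ℝ :=
  1 / (((n : ℝ) + 1) ^ 2 * ((2 * (n + 1)).choose (n + 1) : ℝ))

lemma aperyWeight_eq_div_centralBinom (n : ℕ) :
    aperyWeight n = 1 / (2 * ((n : ℝ) + 1) * (2 * n + 1) * n.centralBinom) := by
  have ratio : ((n : ℝ) + 1) * (n + 1).centralBinom = 2 * (2 * n + 1) * n.centralBinom := by
    exact_mod_cast Nat.succ_mul_centralBinom_succ n
  rw [aperyWeight, ← Nat.centralBinom_eq_two_mul_choose]
  congr 1
  linear_combination ((n : ℝ) + 1) * ratio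

lemma betaNat_self_eq_div_centralBinom (n : ℕ) :
    betaNat n n = 1 / ((2 * n + 1) * n.centralBinom) := by
  have factorials : (n.centralBinom : ℝ) * n.factorial * n.factorial = (n + n).factorial := by
    rw [Nat.centralBinom_eq_two_mul_choose, two_mul]
    exact_mod_cast Nat.add_choose_mul_factorial_mul_factorial n n
  have : (n.centralBinom : ℝ) ≠ 0 := mod_cast n.centralBinom_ne_zero
  rw [betaNat, Nat.factorial_succ]
  push_cast
  rw [← factorials]
  field_simp
  ring

lemma betaNat_self (n : ℕ) : betaNat n n = 2 * ((n : ℝ) + 1) * aperyWeight n := by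
  rw [aperyWeight_eq_div_centralBinom, betaNat_self_eq_div_centralBinom]
  field_simp

lemma betaNat_succ_self (n : ℕ) : betaNat (n + 1) n = ((n : ℝ) + 1) * aperyWeight n := by
  rw [betaNat_succ_left, betaNat_self]
  field_simp
  ring

lemma betaNat_zero_right (i : ℕ) : betaNat i 0 = 1 / ((i : ℝ) + 1) := by
  rw [betaNat_comm, betaNat_zero_left]

section HarmonicPair

/-- One half of a Wilf–Zeilberger pair, with partner `harmonicG`: the coefficient of `x²` in the
deformation of `B(i + 1, j + 1) / (j + 1)` by `∏_{k ≤ i} (1 + x²/k²) ∏_{k ≤ j} (1 + x²/k²)`. -/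
noncomputable def harmonicF (i j : ℕ) : ℝ := betaNat i j / ((j : ℝ) + 1) * (H 2 i + H 2 j)

/-- The partner of `harmonicF`. -/
noncomputable def harmonicG (i j : ℕ) : ℝ := betaNat i j / ((i : ℝ) + 1) * (H 2 i + H 2 j)

lemma isWZPair_harmonic : IsWZPair harmonicF harmonicG := fun i j => by
  simp only [harmonicF, harmonicG, betaNat_succ_left, betaNat_succ_right, H_succ]
  field_simp
  ring

lemma harmonic_staircase (n : ℕ) :
    harmonicG n n + harmonicF (n + 1) n
      = 6 * (aperyWeight n * H 2 n) + aperyWeight n / ((n : ℝ) + 1) ^ 2 := by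
  rw [harmonicF, harmonicG, betaNat_self, betaNat_succ_self, H_succ]
  field_simp
  ring

lemma harmonicF_zero_left (j : ℕ) : harmonicF 0 j = H 2 j / ((j : ℝ) + 1) ^ 2 := by
  rw [harmonicF, betaNat_zero_left, H_zero, zero_add]
  field_simp

lemma tendsto_sum_harmonicG_top :
    Tendsto (fun N => ∑ i ∈ range N, harmonicG i N) atTop (𝓝 0) := by
  refine tendsto_sum_range_zero_of_abs_le 4 0 fun M i _ => ?_
  have := H_nonneg 2 i
  have := H_nonneg 2 M
  have := betaNat_nonneg i M
  rw [harmonicG, abs_of_nonneg (by positivity)]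
  calc betaNat i M / ((i : ℝ) + 1) * (H 2 i + H 2 M)
    _ ≤ 1 / ((M : ℝ) + 1) / ((i : ℝ) + 1) * (2 + 2) := by
      gcongr
      exacts [betaNat_le_right i M, H_two_le_two i, H_two_le_two M]
    _ = 4 * (1 + H 1 M) ^ 0 / (((M : ℝ) + 1) * ((i : ℝ) + 1)) := by field_simp; norm_num

lemma tendsto_sum_harmonic_staircase :
    Tendsto (fun N => ∑ n ∈ range N,
      (6 * (aperyWeight n * H 2 n) + aperyWeight n / ((n : ℝ) + 1) ^ 2)) atTop
      (𝓝 (Real.pi ^ 4 / 120)) := by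
  simpa only [harmonic_staircase] using isWZPair_harmonic.tendsto_sum_staircase
    (by simpa only [harmonicF_zero_left] using tendsto_sum_H_two_div_sq) tendsto_sum_harmonicG_top

end HarmonicPair

section ZetaFourPair

/-- The coefficient of `x²` in
`n!² (1 + 2x)_n (1 - 2x)_n (1 + x)_k (1 - x)_k / ((2n)! (1 + x)_{n+k+1} (1 - x)_{n+k+1})`, a kernel
that accelerates `∑ 1 / (m² - x²)`; it is used to accelerate `ζ(4)`. -/
noncomputable def zetaFourF (n k : ℕ) : ℝ :=
  betaNat n k ^ 2 / n.centralBinom * (H 2 (n + k + 1) - H 2 k - 4 * H 2 n)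

/-- The partner of `zetaFourF`. The rational certificate is the same for all `x`, so that it also
serves for the coefficient of `x²`. -/
noncomputable def zetaFourG (n k : ℕ) : ℝ :=
  zetaFourF n k * ((2 * k + 3 * ((n : ℝ) + 1)) / (2 * (2 * n + 1)))

lemma isWZPair_zetaFour : IsWZPair zetaFourF zetaFourG := fun n k => by
  have centralBinom_succ :
      ((n + 1).centralBinom : ℝ) = 2 * (2 * n + 1) * n.centralBinom / ((n : ℝ) + 1) := by
    rw [eq_div_iff (by positivity), mul_comm]
    exact_mod_cast Nat.succ_mul_centralBinom_succ n
  have : (n.centralBinom : ℝ) ≠ 0 := mod_cast n.centralBinom_ne_zero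
  simp only [zetaFourF, zetaFourG, betaNat_succ_left, betaNat_succ_right, centralBinom_succ,
    show n + 1 + k + 1 = n + k + 1 + 1 by ring, show n + (k + 1) + 1 = n + k + 1 + 1 by ring,
    H_succ]
  push_cast
  field_simp
  ring

lemma zetaFourF_zero_left (k : ℕ) : zetaFourF 0 k = 1 / ((k : ℝ) + 1) ^ 4 := by
  rw [zetaFourF, betaNat_zero_left, zero_add, H_succ, H_zero, Nat.centralBinom_zero]
  field_simp
  ring

lemma zetaFourG_zero_right (n : ℕ) :
    zetaFourG n 0 = 3 * (aperyWeight n / ((n : ℝ) + 1) ^ 2) - 9 * (aperyWeight n * H 2 n) := by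
  have : (n.centralBinom : ℝ) ≠ 0 := mod_cast n.centralBinom_ne_zero
  rw [zetaFourG, zetaFourF, betaNat_zero_right, aperyWeight_eq_div_centralBinom, add_zero, H_succ,
    H_zero]
  push_cast
  field_simp
  ring

lemma abs_zetaFourF_le (n k : ℕ) : |zetaFourF n k| ≤ 10 * betaNat n k ^ 2 := by
  have harmonic_le : |H 2 (n + k + 1) - H 2 k - 4 * H 2 n| ≤ 10 := by
    have := H_nonneg 2 n
    have := H_nonneg 2 k
    have := H_nonneg 2 (n + k + 1)
    rw [abs_le]
    constructor <;> linarith [H_two_le_two n, H_two_le_two k, H_two_le_two (n + k + 1)]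
  have one_le_centralBinom : (1 : ℝ) ≤ n.centralBinom := mod_cast n.centralBinom_pos
  rw [zetaFourF, abs_mul, abs_of_nonneg (by positivity), mul_comm]
  gcongr
  exact div_le_self (by positivity) one_le_centralBinom

lemma tendsto_sum_zetaFourF_right :
    Tendsto (fun N => ∑ k ∈ range N, zetaFourF N k) atTop (𝓝 0) := by
  refine tendsto_sum_range_zero_of_abs_le 10 0 fun M k _ => (abs_zetaFourF_le M k).trans ?_
  have := betaNat_nonneg M k
  calc 10 * betaNat M k ^ 2
    _ = 10 * (betaNat M k * betaNat M k) := by ring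
    _ ≤ 10 * (1 / ((M : ℝ) + 1) * (1 / ((k : ℝ) + 1))) := by
      gcongr
      exacts [betaNat_le_left M k, betaNat_le_right M k]
    _ = 10 * (1 + H 1 M) ^ 0 / (((M : ℝ) + 1) * ((k : ℝ) + 1)) := by field_simp

lemma tendsto_sum_zetaFourG_top :
    Tendsto (fun N => ∑ n ∈ range N, zetaFourG n N) atTop (𝓝 0) := by
  refine tendsto_sum_range_zero_of_abs_le 25 0 fun M n hn => ?_
  have certificate_le :
      (2 * M + 3 * ((n : ℝ) + 1)) / (2 * (2 * n + 1)) ≤ 5 * (M + 1) / (2 * ((n : ℝ) + 1)) := by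
    have : (n : ℝ) ≤ M := mod_cast hn.le
    gcongr ?_ / (2 * ?_) <;> linarith [Nat.cast_nonneg (α := ℝ) n]
  rw [zetaFourG, abs_mul,
    abs_of_nonneg (by positivity : 0 ≤ (2 * M + 3 * ((n : ℝ) + 1)) / (2 * (2 * n + 1)))]
  have := betaNat_nonneg n M
  calc |zetaFourF n M| * ((2 * M + 3 * ((n : ℝ) + 1)) / (2 * (2 * n + 1)))
    _ ≤ 10 * (1 / ((M : ℝ) + 1)) ^ 2 * (5 * (M + 1) / (2 * ((n : ℝ) + 1))) := by
      refine mul_le_mul ((abs_zetaFourF_le n M).trans ?_) certificate_le (by positivity)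
        (by positivity)
      gcongr
      exact betaNat_le_right n M
    _ = 25 * (1 + H 1 M) ^ 0 / (((M : ℝ) + 1) * ((n : ℝ) + 1)) := by field_simp; norm_num

lemma tendsto_sum_zetaFourG_bottom :
    Tendsto (fun N => ∑ n ∈ range N,
      (3 * (aperyWeight n / ((n : ℝ) + 1) ^ 2) - 9 * (aperyWeight n * H 2 n))) atTop
      (𝓝 (Real.pi ^ 4 / 90)) := by
  simpa only [zetaFourG_zero_right] using isWZPair_zetaFour.tendsto_sum_bottom
    (by simpa only [zetaFourF_zero_left] using hasSum_one_div_succ_pow_four.tendsto_sum_nat)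
    tendsto_sum_zetaFourG_top tendsto_sum_zetaFourF_right

end ZetaFourPair

lemma tendsto_sum_aperyWeight_mul_H_two :
    Tendsto (fun N => ∑ n ∈ range N, aperyWeight n * H 2 n) atTop (𝓝 (Real.pi ^ 4 / 1944)) := by
  convert ((tendsto_sum_harmonic_staircase.const_mul 3).sub
    tendsto_sum_zetaFourG_bottom).div_const 27 using 2
  · rw [mul_sum, ← sum_sub_distrib, sum_div]
    exact sum_congr rfl fun n _ => by ring
  · ring

lemma tendsto_sum_aperyWeight_div_sq :
    Tendsto (fun N => ∑ n ∈ range N, aperyWeight n / ((n : ℝ) + 1) ^ 2) atTop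
      (𝓝 (17 * Real.pi ^ 4 / 3240)) := by
  convert tendsto_sum_harmonic_staircase.sub
    (tendsto_sum_aperyWeight_mul_H_two.const_mul 6) using 2
  · rw [mul_sum, ← sum_sub_distrib]
    exact sum_congr rfl fun n _ => by ring
  · ring

section AlternatingPair

/-- One half of a Wilf–Zeilberger pair, with partner `quadraticG`: twice the coefficient of `ε²` in
`B(i + 1 + ε, j + 1 - ε) / ((j + 1 - ε) Γ(1 + ε) Γ(1 - ε))`, plus `harmonicF`, which removes the
harmonic numbers of order two. -/
noncomputable def quadraticF (i j : ℕ) : ℝ :=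
  betaNat i j / ((j : ℝ) + 1)
    * ((H 1 i - H 1 j + 1 / ((j : ℝ) + 1)) ^ 2 + 1 / ((j : ℝ) + 1) ^ 2)

/-- The partner of `quadraticF`, obtained in the same way from `i + 1 + ε` in place of `j + 1 - ε`
in the denominator. -/
noncomputable def quadraticG (i j : ℕ) : ℝ :=
  betaNat i j / ((i : ℝ) + 1)
    * ((H 1 i - H 1 j - 1 / ((i : ℝ) + 1)) ^ 2 + 1 / ((i : ℝ) + 1) ^ 2)

lemma isWZPair_quadratic : IsWZPair quadraticF quadraticG := fun i j => by
  simp only [quadraticF, quadraticG, betaNat_succ_left, betaNat_succ_right, H_succ]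
  field_simp
  ring

/-- A correction to `quadraticF` carrying the alternating harmonic numbers; on the axis `i = 0` it
cancels the term `H_j² / (j + 1)²` of `quadraticF`. -/
noncomputable def alternatingF (i j : ℕ) : ℝ :=
  betaNat i j * (2 * altH 2 i / ((j : ℝ) + 1)
    - (-1) ^ i * (H 1 i - H 1 j) ^ 2 / ((i : ℝ) + j + 1))

/-- The partner of `alternatingF`. -/
noncomputable def alternatingG (i j : ℕ) : ℝ :=
  betaNat i j * (2 * altH 2 i / ((i : ℝ) + 1)
    - (-1) ^ i * (H 1 i - H 1 j) ^ 2 / ((i : ℝ) + j + 1)) - (-1) ^ i * quadraticG i j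

lemma isWZPair_alternating : IsWZPair alternatingF alternatingG := fun i j => by
  simp only [alternatingF, alternatingG, quadraticG, betaNat_succ_left, betaNat_succ_right, H_succ,
    altH_succ, pow_succ (-1 : ℝ) i]
  push_cast
  rw [show (i : ℝ) + 1 + j + 1 = i + j + 2 by ring, show (i : ℝ) + (j + 1) + 1 = i + j + 2 by ring]
  field_simp
  ring

lemma quadratic_add_alternating_staircase (n : ℕ) :
    (quadraticG + alternatingG) n n + (quadraticF + alternatingF) (n + 1) n
      = 6 * (aperyWeight n * altH 2 n) + 9 * (aperyWeight n / ((n : ℝ) + 1) ^ 2)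
        - 11 / 2 * ((-1) ^ n * aperyWeight n / ((n : ℝ) + 1) ^ 2) := by
  simp only [Pi.add_apply, quadraticF, quadraticG, alternatingF, alternatingG, betaNat_self,
    betaNat_succ_self, H_succ, altH_succ, pow_succ (-1 : ℝ) n]
  push_cast
  rw [show (n : ℝ) + 1 + n + 1 = 2 * (n + 1) by ring]
  field_simp
  ring

lemma quadraticF_add_alternatingF_zero_left (j : ℕ) :
    (quadraticF + alternatingF) 0 j
      = 2 * (1 / ((j : ℝ) + 1) ^ 4) - 2 * (H 1 j / ((j : ℝ) + 1) ^ 3) := by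
  simp only [Pi.add_apply, quadraticF, alternatingF, betaNat_zero_left, H_zero, altH_zero]
  push_cast
  field_simp
  ring

lemma tendsto_sum_quadraticF_add_alternatingF_left :
    Tendsto (fun N => ∑ j ∈ range N, (quadraticF + alternatingF) 0 j) atTop
      (𝓝 (Real.pi ^ 4 / 60)) := by
  simp only [quadraticF_add_alternatingF_zero_left, sum_sub_distrib, ← mul_sum]
  convert (hasSum_one_div_succ_pow_four.tendsto_sum_nat.const_mul 2).sub
    (tendsto_sum_H_one_div_cube.const_mul 2) using 2
  ring

lemma abs_quadraticG_le {i M : ℕ} (h : i ≤ M) :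
    |quadraticG i M| ≤ 2 * (1 + H 1 M) ^ 2 / (((M : ℝ) + 1) * ((i : ℝ) + 1)) := by
  have hH := H_nonneg 1 M
  have hβ := betaNat_nonneg i M
  have inv_le_one : 1 / ((i : ℝ) + 1) ≤ 1 := by
    rw [div_le_one (by positivity)]
    linarith [Nat.cast_nonneg (α := ℝ) i]
  have shift_le : |H 1 i - H 1 M - 1 / ((i : ℝ) + 1)| ≤ 1 + H 1 M := by
    have hi : 0 ≤ 1 / ((i : ℝ) + 1) := by positivity
    have hD := abs_le.1 (abs_H_sub_H_le (s := 1) h)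
    exact abs_le.2 ⟨by linarith, by linarith⟩
  rw [quadraticG, abs_of_nonneg (by positivity)]
  calc betaNat i M / ((i : ℝ) + 1)
        * ((H 1 i - H 1 M - 1 / ((i : ℝ) + 1)) ^ 2 + 1 / ((i : ℝ) + 1) ^ 2)
    _ ≤ 1 / ((M : ℝ) + 1) / ((i : ℝ) + 1) * ((1 + H 1 M) ^ 2 + (1 + H 1 M) ^ 2) := by
      gcongr ?_ / _ * (?_ + ?_)
      · exact betaNat_le_right i M
      · exact sq_le_sq' (abs_le.1 shift_le).1 (abs_le.1 shift_le).2
      · rw [← one_div_pow]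
        gcongr
        linarith
    _ = 2 * (1 + H 1 M) ^ 2 / (((M : ℝ) + 1) * ((i : ℝ) + 1)) := by field_simp; ring

lemma abs_alternatingG_le {i M : ℕ} (h : i ≤ M) :
    |alternatingG i M| ≤ 7 * (1 + H 1 M) ^ 2 / (((M : ℝ) + 1) * ((i : ℝ) + 1)) := by
  have hH := H_nonneg 1 M
  have altH_term : |2 * altH 2 i / ((i : ℝ) + 1)| ≤ 4 / ((i : ℝ) + 1) := by
    rw [abs_div, abs_mul, abs_two, abs_of_pos (by positivity : (0 : ℝ) < i + 1)]
    gcongr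
    linarith [abs_altH_le_H 2 i, H_two_le_two i]
  have square_term : |(-1) ^ i * (H 1 i - H 1 M) ^ 2 / ((i : ℝ) + M + 1)|
      ≤ H 1 M ^ 2 / ((i : ℝ) + 1) := by
    rw [abs_div, abs_mul, abs_neg_one_pow, one_mul, abs_pow,
      abs_of_pos (by positivity : (0 : ℝ) < i + M + 1)]
    gcongr
    · exact abs_H_sub_H_le h
    · linarith [Nat.cast_nonneg (α := ℝ) M]
  calc |alternatingG i M|
    _ ≤ betaNat i M * (|2 * altH 2 i / ((i : ℝ) + 1)|
          + |(-1) ^ i * (H 1 i - H 1 M) ^ 2 / ((i : ℝ) + M + 1)|) + |quadraticG i M| := by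
      refine (abs_sub _ _).trans ?_
      rw [abs_mul, abs_mul, abs_neg_one_pow, one_mul, abs_of_nonneg (betaNat_nonneg i M)]
      gcongr
      · exact betaNat_nonneg i M
      · exact abs_sub _ _
    _ ≤ 1 / ((M : ℝ) + 1) * (4 / ((i : ℝ) + 1) + H 1 M ^ 2 / ((i : ℝ) + 1))
          + 2 * (1 + H 1 M) ^ 2 / (((M : ℝ) + 1) * ((i : ℝ) + 1)) := by
      gcongr
      exacts [betaNat_le_right i M, abs_quadraticG_le h]
    _ = (4 + H 1 M ^ 2 + 2 * (1 + H 1 M) ^ 2) / (((M : ℝ) + 1) * ((i : ℝ) + 1)) := by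
      field_simp
    _ ≤ 7 * (1 + H 1 M) ^ 2 / (((M : ℝ) + 1) * ((i : ℝ) + 1)) := by
      gcongr
      nlinarith

lemma tendsto_sum_quadraticG_add_alternatingG_top :
    Tendsto (fun N => ∑ i ∈ range N, (quadraticG + alternatingG) i N) atTop (𝓝 0) := by
  refine tendsto_sum_range_zero_of_abs_le 9 2 fun M i hi => ?_
  refine (abs_add_le _ _).trans ((add_le_add (abs_quadraticG_le hi.le)
    (abs_alternatingG_le hi.le)).trans_eq ?_)
  ring

end AlternatingPair

lemma tendsto_sum_quadratic_add_alternating_staircase :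
    Tendsto (fun N => ∑ n ∈ range N,
      (6 * (aperyWeight n * altH 2 n) + 9 * (aperyWeight n / ((n : ℝ) + 1) ^ 2)
        - 11 / 2 * ((-1) ^ n * aperyWeight n / ((n : ℝ) + 1) ^ 2))) atTop
      (𝓝 (Real.pi ^ 4 / 60)) := by
  simpa only [quadratic_add_alternating_staircase] using
    (isWZPair_quadratic.add isWZPair_alternating).tendsto_sum_staircase
      tendsto_sum_quadraticF_add_alternatingF_left tendsto_sum_quadraticG_add_alternatingG_top

end

theorem stmt_9 :
    Tendsto (fun N => ∑ n ∈ Finset.range N,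
      1 / (((n:ℝ)+1)^2 * ((2*(n+1)).choose (n+1) : ℝ)) *
        (6 * H 2 ((n+1)/2) - (-1:ℝ)^(n+1) / ((n:ℝ)+1)^2))
      atTop (𝓝 (13 * Real.pi^4 / 1620)) := by
  convert ((tendsto_sum_quadratic_add_alternating_staircase.const_mul 2).add
    (tendsto_sum_aperyWeight_mul_H_two.const_mul 12)).sub
    (tendsto_sum_aperyWeight_div_sq.const_mul 6) using 2 with N
  · simp only [Finset.mul_sum, ← Finset.sum_add_distrib, ← Finset.sum_sub_distrib]
    refine Finset.sum_congr rfl fun n _ => ?_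
    have half := two_mul_H_half 2 (n + 1)
    rw [H_succ, altH_succ] at half
    rw [← aperyWeight, pow_succ (-1 : ℝ) n]
    linear_combination 3 * aperyWeight n * half
  · ring
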